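/- arXiv:1710.10040 — 5 statements merged into one kernel-verified Lean document; each statement's English description precedes it below -/
import Mathlib

section
/- Let t ∈ ℝ, let R_t = ((cos t, −sin t),(sin t, cos t)) ∈ SO(2), let k₂ ∈ SO(m), and set k = diag(R_t, k₂) ∈ M_{m+2}(ℝ). Then for all X ∈ 𝔪: A₀(kXk⁻¹) = cos(2t)·(k(A₀X)k⁻¹) + sin(2t)·J(k(A₀X)k⁻¹). Consequently, the circle of real structures 𝔄 = {cos θ·A₀ + sin θ·(J∘A₀) : θ ∈ ℝ} on 𝔪 is invariant under conjugation by every element of the isotropy group K = {diag(k₁,k₂) : k₁ ∈ SO(2), k₂ ∈ SO(m)}: for each k ∈ K and A ∈ 𝔄, the map X ↦ kA(k⁻¹Xk)k⁻¹ again belongs to 𝔄. -/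
open Matrix

/-!
On block off-diagonal matrices, conjugation by `diag(R_{-θ}, 1)` is `cos θ · id + sin θ · J`. Hence
`cos θ · A₀ + sin θ · J A₀` is conjugation by `diag(S, 1)`, where `S = R_{-θ} diag(1, -1)`, and `S`
runs through all reflections of the plane as `θ` varies. The commutation relation thereby reduces to
`diag(1, -1) R_t = R_{-2t} R_t diag(1, -1)`, and the invariance of the circle `𝔄` to the fact that
a conjugate of a reflection by an element of `O(2)` is a reflection.
-/

section Conjugation

variable {ι R : Type*} [Fintype ι] [DecidableEq ι] [CommRing R]

/-- The adjoint action `X ↦ g X g⁻¹` of matrices on matrices. It is defined for every square `g`,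
through the junk value `g⁻¹ = 0` when `g` is not invertible, to match expressions in matrices
rather than units. -/
noncomputable def conjBy (g X : Matrix ι ι R) : Matrix ι ι R :=
  g * X * g⁻¹

theorem conjBy_mul (g h X : Matrix ι ι R) : conjBy (g * h) X = conjBy g (conjBy h X) := by
  simp only [conjBy, Matrix.mul_inv_rev, Matrix.mul_assoc]

theorem conjBy_inv {g : Matrix ι ι R} (hg : IsUnit g) (X : Matrix ι ι R) :
    conjBy g⁻¹ X = g⁻¹ * X * g := by
  rw [conjBy, nonsing_inv_nonsing_inv g ((isUnit_iff_isUnit_det g).mp hg)]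

end Conjugation

section BlockOffDiagonal

/-- A block matrix with zero diagonal blocks. For `s = diag(-1, 1)` these are the solutions of
`s X s⁻¹ = -X`, so `𝔪` consists of such matrices. -/
def IsBlockOffDiagonal {p n R : Type*} [Zero R] (X : Matrix (p ⊕ n) (p ⊕ n) R) : Prop :=
  ∃ B C, X = fromBlocks 0 B C 0

theorem isBlockOffDiagonal_fromBlocks {p n R : Type*} [Zero R] {A : Matrix p p R}
    {B : Matrix p n R} {C : Matrix n p R} {D : Matrix n n R} :
    IsBlockOffDiagonal (fromBlocks A B C D) ↔ A = 0 ∧ D = 0 := by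
  simp [IsBlockOffDiagonal, fromBlocks_inj]

variable {p n R : Type*} [Fintype p] [DecidableEq p] [Fintype n] [DecidableEq n] [CommRing R]

theorem inv_fromBlocks_diagonal {P : Matrix p p R} {Q : Matrix n n R} (hP : IsUnit P)
    (hQ : IsUnit Q) : (fromBlocks P 0 0 Q)⁻¹ = fromBlocks P⁻¹ 0 0 Q⁻¹ := by
  simp [inv_fromBlocks_zero₂₁_of_isUnit_iff P 0 Q (iff_of_true hP hQ)]

theorem conjBy_fromBlocks_diagonal {P : Matrix p p R} {Q : Matrix n n R} (hP : IsUnit P)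
    (hQ : IsUnit Q) (A : Matrix p p R) (B : Matrix p n R) (C : Matrix n p R) (D : Matrix n n R) :
    conjBy (fromBlocks P 0 0 Q) (fromBlocks A B C D) =
      fromBlocks (P * A * P⁻¹) (P * B * Q⁻¹) (Q * C * P⁻¹) (Q * D * Q⁻¹) := by
  simp [conjBy, inv_fromBlocks_diagonal hP hQ, fromBlocks_multiply]

theorem IsBlockOffDiagonal.conjBy {X : Matrix (p ⊕ n) (p ⊕ n) R} (hX : IsBlockOffDiagonal X)
    {P : Matrix p p R} {Q : Matrix n n R} (hP : IsUnit P) (hQ : IsUnit Q) :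
    IsBlockOffDiagonal (conjBy (fromBlocks P 0 0 Q) X) := by
  obtain ⟨B, C, rfl⟩ := hX
  exact ⟨P * B * Q⁻¹, Q * C * P⁻¹, by simp [conjBy_fromBlocks_diagonal hP hQ]⟩

theorem conjBy_neg_one_one_eq_neg_iff [IsAddTorsionFree R] {X : Matrix (p ⊕ n) (p ⊕ n) R} :
    conjBy (fromBlocks (-1) 0 0 1) X = -X ↔ IsBlockOffDiagonal X := by
  have hX := fromBlocks_toBlocks X
  generalize X.toBlocks₁₁ = A, X.toBlocks₁₂ = B, X.toBlocks₂₁ = C, X.toBlocks₂₂ = D at hX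
  subst hX
  have inv_neg_one : (-1 : Matrix p p R)⁻¹ = -1 := inv_eq_right_inv (by simp)
  have isUnit_neg_one : IsUnit (-1 : Matrix p p R) := isUnit_one.neg
  rw [conjBy_fromBlocks_diagonal isUnit_neg_one isUnit_one, inv_neg_one]
  simp [isBlockOffDiagonal_fromBlocks, fromBlocks_neg, ← Matrix.ext_iff, self_eq_neg]

end BlockOffDiagonal

section Plane

/-- The matrix `R_θ` of the rotation of the plane by the angle `θ`. -/
noncomputable def planeRotation (θ : ℝ) : Matrix (Fin 2) (Fin 2) ℝ :=
  !![Real.cos θ, -Real.sin θ; Real.sin θ, Real.cos θ]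

theorem planeRotation_add (θ φ : ℝ) :
    planeRotation (θ + φ) = planeRotation θ * planeRotation φ := by
  ext i j
  fin_cases i <;> fin_cases j <;> simp [planeRotation, Real.cos_add, Real.sin_add] <;> ring

theorem planeRotation_mul_neg (θ : ℝ) : planeRotation θ * planeRotation (-θ) = 1 := by
  rw [← planeRotation_add, add_neg_cancel]
  simp [planeRotation, one_fin_two]

theorem isUnit_planeRotation (θ : ℝ) : IsUnit (planeRotation θ) :=
  .of_mul_eq_one (planeRotation (-θ)) (planeRotation_mul_neg θ)

theorem inv_planeRotation (θ : ℝ) : (planeRotation θ)⁻¹ = planeRotation (-θ) :=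
  inv_eq_right_inv (planeRotation_mul_neg θ)

theorem det_planeRotation (θ : ℝ) : (planeRotation θ).det = 1 := by
  simp [planeRotation, ← sq]

theorem planeRotation_mem_orthogonalGroup (θ : ℝ) :
    planeRotation θ ∈ orthogonalGroup (Fin 2) ℝ :=
  specialUnitaryGroup_le_unitaryGroup (by simp [planeRotation])

theorem exists_eq_planeRotation {S : Matrix (Fin 2) (Fin 2) ℝ}
    (hS : S ∈ specialOrthogonalGroup (Fin 2) ℝ) : ∃ θ, S = planeRotation θ := by
  obtain ⟨h_diag, h_anti, h_norm⟩ := mem_specialOrthogonalGroup_fin_two_iff.mp hS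
  have norm_eq_one : ‖(⟨S 0 0, S 1 0⟩ : ℂ)‖ = 1 := by
    rw [← sq_eq_sq₀ (norm_nonneg _) zero_le_one, Complex.sq_norm, Complex.normSq_mk]
    linear_combination h_norm - (S 0 1 - S 1 0) * h_anti
  obtain ⟨θ, hθ⟩ := (Complex.norm_eq_one_iff _).mp norm_eq_one
  have h_cos : Real.cos θ = S 0 0 := by simpa using congrArg Complex.re hθ
  have h_sin : Real.sin θ = S 1 0 := by simpa using congrArg Complex.im hθ
  refine ⟨θ, ?_⟩
  rw [planeRotation, h_cos, h_sin, ← h_anti]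
  nth_rw 2 [h_diag]
  exact eta_fin_two S

/-- The reflection `diag(1, -1)` of the plane, the upper-left block of `a₀`. -/
def axisReflection : Matrix (Fin 2) (Fin 2) ℝ :=
  !![1, 0; 0, -1]

theorem axisReflection_mul_self : axisReflection * axisReflection = 1 := by
  simp [axisReflection, one_fin_two]

theorem isUnit_axisReflection : IsUnit axisReflection :=
  .of_mul_eq_one axisReflection axisReflection_mul_self

theorem det_axisReflection : axisReflection.det = -1 := by
  simp [axisReflection]

theorem axisReflection_mem_orthogonalGroup : axisReflection ∈ orthogonalGroup (Fin 2) ℝ := by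
  have h_symm : axisReflectionᵀ = axisReflection := (transposeᵣ_eq _).symm
  rw [mem_orthogonalGroup_iff, h_symm, axisReflection_mul_self]

theorem axisReflection_mul_planeRotation (θ : ℝ) :
    axisReflection * planeRotation θ = planeRotation (-θ) * axisReflection := by
  simp [axisReflection, planeRotation]

theorem exists_eq_planeRotation_mul_axisReflection {S : Matrix (Fin 2) (Fin 2) ℝ}
    (hS : S ∈ orthogonalGroup (Fin 2) ℝ) (hdet : S.det = -1) :
    ∃ θ, S = planeRotation θ * axisReflection := by
  have h_special : S * axisReflection ∈ specialOrthogonalGroup (Fin 2) ℝ :=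
    ⟨mul_mem hS axisReflection_mem_orthogonalGroup, by simp [hdet, det_axisReflection]⟩
  obtain ⟨θ, hθ⟩ := exists_eq_planeRotation h_special
  exact ⟨θ, by rw [← hθ, Matrix.mul_assoc, axisReflection_mul_self, Matrix.mul_one]⟩

theorem exists_conjBy_planeRotation_mul_axisReflection {l : Matrix (Fin 2) (Fin 2) ℝ}
    (hl : l ∈ orthogonalGroup (Fin 2) ℝ) (θ : ℝ) :
    ∃ θ', conjBy l (planeRotation θ * axisReflection) = planeRotation θ' * axisReflection := by
  have hl_unit : IsUnit l := .of_mul_eq_one lᵀ ((mem_orthogonalGroup_iff _ _).mp hl)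
  have hl_inv : l⁻¹ = lᵀ := inv_eq_right_inv ((mem_orthogonalGroup_iff _ _).mp hl)
  refine exists_eq_planeRotation_mul_axisReflection ?_ ?_
  · rw [conjBy, hl_inv]
    exact mul_mem (mul_mem hl (mul_mem (planeRotation_mem_orthogonalGroup θ)
      axisReflection_mem_orthogonalGroup)) (transpose_mem_unitaryGroup_iff.mpr hl)
  · rw [conjBy, det_conj hl_unit, det_mul, det_planeRotation, det_axisReflection, one_mul]

end Plane

section RealStructures

variable {n : Type*} [Fintype n] [DecidableEq n]

/-- The complex structure `J`, conjugation by `j = diag(R_{-π/2}, 1)`; it squares to `-1` on block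
off-diagonal matrices. -/
noncomputable def complexStructure (X : Matrix (Fin 2 ⊕ n) (Fin 2 ⊕ n) ℝ) :
    Matrix (Fin 2 ⊕ n) (Fin 2 ⊕ n) ℝ :=
  conjBy (fromBlocks !![0, 1; -1, 0] 0 0 1) X

/-- The real structure `A₀`, conjugation by `a₀ = diag(1, -1, 1, …, 1)`. -/
noncomputable def baseRealStructure (X : Matrix (Fin 2 ⊕ n) (Fin 2 ⊕ n) ℝ) :
    Matrix (Fin 2 ⊕ n) (Fin 2 ⊕ n) ℝ :=
  conjBy (fromBlocks axisReflection 0 0 1) X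

theorem IsBlockOffDiagonal.baseRealStructure {X : Matrix (Fin 2 ⊕ n) (Fin 2 ⊕ n) ℝ}
    (hX : IsBlockOffDiagonal X) : IsBlockOffDiagonal (baseRealStructure X) :=
  hX.conjBy isUnit_axisReflection isUnit_one

/-- The member `cos θ A₀ + sin θ (J ∘ A₀)` of the circle `𝔄` of real structures. -/
noncomputable def realStructure (θ : ℝ) (X : Matrix (Fin 2 ⊕ n) (Fin 2 ⊕ n) ℝ) :
    Matrix (Fin 2 ⊕ n) (Fin 2 ⊕ n) ℝ :=
  Real.cos θ • baseRealStructure X + Real.sin θ • complexStructure (baseRealStructure X)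

theorem cos_smul_add_sin_smul_complexStructure {X : Matrix (Fin 2 ⊕ n) (Fin 2 ⊕ n) ℝ}
    (hX : IsBlockOffDiagonal X) (θ : ℝ) :
    Real.cos θ • X + Real.sin θ • complexStructure X =
      conjBy (fromBlocks (planeRotation (-θ)) 0 0 1) X := by
  have quarter_turn : !![0, 1; -1, 0] = planeRotation (-(Real.pi / 2)) := by simp [planeRotation]
  have rotation_eq : planeRotation θ =
      Real.cos θ • 1 + Real.sin θ • planeRotation (Real.pi / 2) := by
    simp [planeRotation, one_fin_two]
  have rotation_neg_eq : planeRotation (-θ) =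
      Real.cos θ • 1 + Real.sin θ • planeRotation (-(Real.pi / 2)) := by
    simp [planeRotation, one_fin_two]
  obtain ⟨B, C, rfl⟩ := hX
  rw [complexStructure, quarter_turn,
    conjBy_fromBlocks_diagonal (isUnit_planeRotation _) isUnit_one,
    conjBy_fromBlocks_diagonal (isUnit_planeRotation _) isUnit_one, inv_planeRotation,
    inv_planeRotation, neg_neg, neg_neg, rotation_neg_eq, rotation_eq]
  simp [fromBlocks_smul, fromBlocks_add, Matrix.add_mul, Matrix.mul_add]

theorem realStructure_eq_conjBy {X : Matrix (Fin 2 ⊕ n) (Fin 2 ⊕ n) ℝ}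
    (hX : IsBlockOffDiagonal X) (θ : ℝ) :
    realStructure θ X = conjBy (fromBlocks (planeRotation (-θ) * axisReflection) 0 0 1) X := by
  rw [realStructure, cos_smul_add_sin_smul_complexStructure hX.baseRealStructure, baseRealStructure,
    ← conjBy_mul]
  simp [fromBlocks_multiply]

theorem baseRealStructure_conjBy {X : Matrix (Fin 2 ⊕ n) (Fin 2 ⊕ n) ℝ}
    (hX : IsBlockOffDiagonal X) (t : ℝ) {k₂ : Matrix n n ℝ} (hk₂ : IsUnit k₂) :
    baseRealStructure (conjBy (fromBlocks (planeRotation t) 0 0 k₂) X) =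
      Real.cos (2 * t) • conjBy (fromBlocks (planeRotation t) 0 0 k₂) (baseRealStructure X) +
      Real.sin (2 * t) • complexStructure
        (conjBy (fromBlocks (planeRotation t) 0 0 k₂) (baseRealStructure X)) := by
  have plane_identity : axisReflection * planeRotation t =
      planeRotation (-(2 * t)) * (planeRotation t * axisReflection) := by
    rw [axisReflection_mul_planeRotation, ← Matrix.mul_assoc, ← planeRotation_add]
    ring_nf
  rw [cos_smul_add_sin_smul_complexStructure
    (hX.baseRealStructure.conjBy (isUnit_planeRotation t) hk₂)]
  simp only [baseRealStructure, ← conjBy_mul]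
  simp [fromBlocks_multiply, plane_identity]

theorem exists_conjBy_realStructure_eq {l₁ : Matrix (Fin 2) (Fin 2) ℝ}
    (hl₁ : l₁ ∈ orthogonalGroup (Fin 2) ℝ) {l₂ : Matrix n n ℝ} (hl₂ : IsUnit l₂) (θ : ℝ) :
    ∃ θ', ∀ X : Matrix (Fin 2 ⊕ n) (Fin 2 ⊕ n) ℝ, IsBlockOffDiagonal X →
      conjBy (fromBlocks l₁ 0 0 l₂)
          (realStructure θ ((fromBlocks l₁ 0 0 l₂)⁻¹ * X * fromBlocks l₁ 0 0 l₂)) =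
        realStructure θ' X := by
  have hl₁_unit : IsUnit l₁ := .of_mul_eq_one l₁ᵀ ((mem_orthogonalGroup_iff _ _).mp hl₁)
  have hl₂_mul_inv : l₂ * l₂⁻¹ = 1 := mul_nonsing_inv l₂ ((isUnit_iff_isUnit_det l₂).mp hl₂)
  obtain ⟨φ, hφ⟩ := exists_conjBy_planeRotation_mul_axisReflection hl₁ (-θ)
  refine ⟨-φ, fun X hX ↦ ?_⟩
  set l := fromBlocks l₁ 0 0 l₂ with hl
  set S := planeRotation (-θ) * axisReflection
  have hl_unit : IsUnit l := isUnit_fromBlocks_zero₂₁.mpr ⟨hl₁_unit, hl₂⟩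
  have hlX : IsBlockOffDiagonal (conjBy l⁻¹ X) := by
    rw [hl, inv_fromBlocks_diagonal hl₁_unit hl₂]
    exact hX.conjBy (isUnit_nonsing_inv_iff.mpr hl₁_unit) (isUnit_nonsing_inv_iff.mpr hl₂)
  have conj_reflection :
      conjBy l (fromBlocks S 0 0 1) = fromBlocks (planeRotation φ * axisReflection) 0 0 1 := by
    rw [hl, conjBy_fromBlocks_diagonal hl₁_unit hl₂, ← hφ]
    simp [conjBy, hl₂_mul_inv]
  calc conjBy l (realStructure θ (l⁻¹ * X * l))
      = conjBy l (conjBy (fromBlocks S 0 0 1) (conjBy l⁻¹ X)) := by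
        rw [← conjBy_inv hl_unit, realStructure_eq_conjBy hlX]
    _ = conjBy (conjBy l (fromBlocks S 0 0 1)) X := by
        rw [← conjBy_mul, ← conjBy_mul, ← conjBy]
    _ = realStructure (-φ) X := by
        rw [conj_reflection, realStructure_eq_conjBy hX, neg_neg]

end RealStructures

theorem stmt_6_general {n : Type*} [Fintype n] [DecidableEq n]
    (s : Matrix (Fin 2 ⊕ n) (Fin 2 ⊕ n) ℝ) (hs : s = fromBlocks (-1) 0 0 1) :
    (∀ (t : ℝ) (k₂ : Matrix n n ℝ), IsUnit k₂ → ∀ k, k = fromBlocks (planeRotation t) 0 0 k₂ →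
      ∀ X, s * X * s⁻¹ = -X →
        baseRealStructure (k * X * k⁻¹) =
          Real.cos (2 * t) • (k * baseRealStructure X * k⁻¹) +
          Real.sin (2 * t) • complexStructure (k * baseRealStructure X * k⁻¹)) ∧
    (∀ θ : ℝ, ∀ l₁ : Matrix (Fin 2) (Fin 2) ℝ, l₁ᵀ * l₁ = 1 →
      ∀ l₂ : Matrix n n ℝ, IsUnit l₂ → ∀ l, l = fromBlocks l₁ 0 0 l₂ →
      ∃ θ' : ℝ, ∀ X, s * X * s⁻¹ = -X →
        l * realStructure θ (l⁻¹ * X * l) * l⁻¹ = realStructure θ' X) := by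
  subst hs
  constructor
  · rintro t k₂ hk₂ k rfl X hX
    exact baseRealStructure_conjBy (conjBy_neg_one_one_eq_neg_iff.mp hX) t hk₂
  · rintro θ l₁ hl₁ l₂ hl₂ l rfl
    obtain ⟨θ', hθ'⟩ :=
      exists_conjBy_realStructure_eq ((mem_orthogonalGroup_iff' _ _).mpr hl₁) hl₂ θ
    exact ⟨θ', fun X hX ↦ hθ' X (conjBy_neg_one_one_eq_neg_iff.mp hX)⟩

/-- For `k = diag(R_t, k₂)` with `R_t ∈ SO(2)` the rotation by angle `t` and
`k₂ ∈ SO(m)`, one has `A₀(kXk⁻¹) = cos(2t)·(k(A₀X)k⁻¹) + sin(2t)·J(k(A₀X)k⁻¹)` for all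
`X ∈ 𝔪`.  Consequently the circle of real structures
`𝔄 = {cos θ·A₀ + sin θ·(J∘A₀) : θ ∈ ℝ}` on `𝔪` is invariant under conjugation by every
element of the isotropy group `K = SO(2)×SO(m)`: for each `k ∈ K` and each `A ∈ 𝔄` the map
`X ↦ kA(k⁻¹Xk)k⁻¹` again belongs to `𝔄`. -/
theorem stmt_6 (m : ℕ) (hm : 3 ≤ m)
    (s : Matrix (Fin 2 ⊕ Fin m) (Fin 2 ⊕ Fin m) ℝ)
    (hs : s = Matrix.fromBlocks (-1) 0 0 1)
    (mm : Set (Matrix (Fin 2 ⊕ Fin m) (Fin 2 ⊕ Fin m) ℝ))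
    (hmm : mm = {X | Xᵀ * s = -(s * X) ∧ s * X * s⁻¹ = -X})
    (j : Matrix (Fin 2 ⊕ Fin m) (Fin 2 ⊕ Fin m) ℝ)
    (hj : j = Matrix.fromBlocks !![0, 1; -1, 0] 0 0 1)
    (J : Matrix (Fin 2 ⊕ Fin m) (Fin 2 ⊕ Fin m) ℝ →
         Matrix (Fin 2 ⊕ Fin m) (Fin 2 ⊕ Fin m) ℝ)
    (hJ : ∀ X, J X = j * X * j⁻¹)
    (a₀ : Matrix (Fin 2 ⊕ Fin m) (Fin 2 ⊕ Fin m) ℝ)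
    (ha₀ : a₀ = Matrix.fromBlocks !![1, 0; 0, -1] 0 0 1)
    (A₀ : Matrix (Fin 2 ⊕ Fin m) (Fin 2 ⊕ Fin m) ℝ →
          Matrix (Fin 2 ⊕ Fin m) (Fin 2 ⊕ Fin m) ℝ)
    (hA₀ : ∀ X, A₀ X = a₀ * X * a₀⁻¹)
    (t : ℝ) (k₂ : Matrix (Fin m) (Fin m) ℝ) (hk₂ : k₂ᵀ * k₂ = 1) (hk₂det : k₂.det = 1)
    (k : Matrix (Fin 2 ⊕ Fin m) (Fin 2 ⊕ Fin m) ℝ)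
    (hk : k = Matrix.fromBlocks
      !![Real.cos t, -Real.sin t; Real.sin t, Real.cos t] 0 0 k₂) :
    -- the commutation relation A₀ ∘ Ad(k) = cos(2t)·Ad(k)∘A₀ + sin(2t)·J∘Ad(k)∘A₀
    (∀ X ∈ mm,
      A₀ (k * X * k⁻¹) =
        Real.cos (2 * t) • (k * (A₀ X) * k⁻¹) +
        Real.sin (2 * t) • J (k * (A₀ X) * k⁻¹)) ∧
    -- the circle 𝔄 of real structures is invariant under conjugation by every element of K
    (∀ θ : ℝ, ∀ l₁ : Matrix (Fin 2) (Fin 2) ℝ, l₁ᵀ * l₁ = 1 → l₁.det = 1 →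
      ∀ l₂ : Matrix (Fin m) (Fin m) ℝ, l₂ᵀ * l₂ = 1 → l₂.det = 1 →
      ∀ l : Matrix (Fin 2 ⊕ Fin m) (Fin 2 ⊕ Fin m) ℝ, l = Matrix.fromBlocks l₁ 0 0 l₂ →
      ∃ θ' : ℝ, ∀ X ∈ mm,
        l * (Real.cos θ • A₀ (l⁻¹ * X * l) + Real.sin θ • J (A₀ (l⁻¹ * X * l))) * l⁻¹ =
          Real.cos θ' • A₀ X + Real.sin θ' • J (A₀ X)) := by
  subst hmm hj ha₀
  obtain rfl : J = complexStructure := funext hJ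
  obtain rfl : A₀ = baseRealStructure := funext hA₀
  obtain ⟨commutation, invariance⟩ := stmt_6_general s hs
  exact ⟨fun X hX ↦ commutation t k₂ (.of_mul_eq_one_right _ hk₂) k hk X hX.2,
    fun θ l₁ hl₁ _ l₂ hl₂ _ l hl ↦ (invariance θ l₁ hl₁ l₂ (.of_mul_eq_one_right _ hl₂) l hl).imp
      fun _ h X hX ↦ h X hX.2⟩
end

section
/- (Lemma 4.1(i).) Let A be a conjugation on V and let N ∈ V be a unit vector with AN = N. Set T = {X ∈ V : g(X,N) = 0}, and let 𝒬 denote the maximal 𝔄-invariant subspace of T, i.e. the sum of all real-linear subspaces W ⊆ T with iW ⊆ W and AW ⊆ W (equivalently, the largest subspace of T invariant under every conjugation λA with λ ∈ ℂ, |λ| = 1). Then 𝒬 = 𝒞, where 𝒞 = {X ∈ V : ⟨X,N⟩ = 0} is the maximal complex subspace of T. -/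
/-!
Since `Im ⟪v, w⟫ = Re ⟪i v, w⟫`, a real subspace closed under multiplication by `i` on which
`Re ⟪·, N⟫` vanishes is contained in `N^⊥`. Conversely `N^⊥` is invariant under `A`, because a map
that anticommutes with `i` and preserves `Re ⟪·, ·⟫` conjugates `⟪·, ·⟫`, so that
`⟪A X, N⟫ = ⟪A X, A N⟫ = ⟪N, X⟫`.
-/

open RCLike Submodule
open scoped InnerProductSpace

section

variable {𝕜 V V' : Type*} [RCLike 𝕜]
  [SeminormedAddCommGroup V] [InnerProductSpace 𝕜 V]
  [SeminormedAddCommGroup V'] [InnerProductSpace 𝕜 V']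

theorem re_inner_I_smul_left (v w : V) : re ⟪(I : 𝕜) • v, w⟫_𝕜 = im ⟪v, w⟫_𝕜 := by
  simp [inner_smul_left]

theorem inner_map_map_eq_inner_swap {A : V → V'}
    (hA_I : ∀ v, A ((I : 𝕜) • v) = -((I : 𝕜) • A v))
    (hA_re : ∀ v w, re ⟪A v, A w⟫_𝕜 = re ⟪v, w⟫_𝕜) (v w : V) :
    ⟪A v, A w⟫_𝕜 = ⟪w, v⟫_𝕜 := by
  have neg_im_inner : -im ⟪A v, A w⟫_𝕜 = im ⟪v, w⟫_𝕜 :=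
    calc -im ⟪A v, A w⟫_𝕜 = re ⟪A ((I : 𝕜) • v), A w⟫_𝕜 := by
          rw [hA_I, inner_neg_left, map_neg, re_inner_I_smul_left]
      _ = im ⟪v, w⟫_𝕜 := by rw [hA_re, re_inner_I_smul_left]
  rw [← inner_conj_symm w v]
  refine RCLike.ext ?_ ?_
  · rw [hA_re, conj_re]
  · rw [conj_im, ← neg_im_inner, neg_neg]

end

section

variable {𝕜 V : Type*} [RCLike 𝕜] [NormedAddCommGroup V] [InnerProductSpace 𝕜 V]

theorem map_mem_orthogonal_singleton {V' : Type*} [NormedAddCommGroup V']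
    [InnerProductSpace 𝕜 V'] {A : V → V'}
    (hA_I : ∀ v, A ((I : 𝕜) • v) = -((I : 𝕜) • A v))
    (hA_re : ∀ v w, re ⟪A v, A w⟫_𝕜 = re ⟪v, w⟫_𝕜)
    {v w : V} (hv : v ∈ (𝕜 ∙ w)ᗮ) : A v ∈ (𝕜 ∙ A w)ᗮ := by
  rw [mem_orthogonal_singleton_iff_inner_left, inner_map_map_eq_inner_swap hA_I hA_re]
  exact mem_orthogonal_singleton_iff_inner_right.mp hv

variable [Module ℝ V] [IsScalarTower ℝ 𝕜 V]

theorem le_orthogonal_singleton_of_re_inner_eq_zero {N : V} {W : Submodule ℝ V}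
    (hW_re : ∀ v ∈ W, re ⟪v, N⟫_𝕜 = 0) (hW_I : ∀ v ∈ W, (I : 𝕜) • v ∈ W) :
    W ≤ (𝕜 ∙ N)ᗮ.restrictScalars ℝ := by
  intro v hv
  have im_eq_zero : im ⟪v, N⟫_𝕜 = 0 := by
    rw [← re_inner_I_smul_left]
    exact hW_re _ (hW_I v hv)
  rw [restrictScalars_mem, mem_orthogonal_singleton_iff_inner_left]
  exact RCLike.ext (by rw [hW_re v hv, map_zero]) (by rw [im_eq_zero, map_zero])

theorem stmt_9_general {A : V → V} (hA_I : ∀ v, A ((I : 𝕜) • v) = -((I : 𝕜) • A v))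
    (hA_re : ∀ v w, re ⟪A v, A w⟫_𝕜 = re ⟪v, w⟫_𝕜) {N : V} (hN : A N = N) :
    IsGreatest
      {W : Submodule ℝ V | (W : Set V) ⊆ {X | re ⟪X, N⟫_𝕜 = 0} ∧
        (∀ v ∈ W, (I : 𝕜) • v ∈ W) ∧ (∀ v ∈ W, A v ∈ W)}
      ((𝕜 ∙ N)ᗮ.restrictScalars ℝ) := by
  refine ⟨⟨fun v hv => ?re_inner_eq_zero, fun v => (𝕜 ∙ N)ᗮ.smul_mem I, fun v hv => ?map_mem⟩,
    fun W ⟨hW_re, hW_I, _⟩ => le_orthogonal_singleton_of_re_inner_eq_zero hW_re hW_I⟩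
  case re_inner_eq_zero =>
    have inner_eq_zero : ⟪v, N⟫_𝕜 = 0 := mem_orthogonal_singleton_iff_inner_left.mp hv
    rw [Set.mem_ofPred_eq, inner_eq_zero, map_zero]
  case map_mem =>
    simpa only [hN, restrictScalars_mem] using map_mem_orthogonal_singleton hA_I hA_re hv

end

/-- Lemma 4.1(i): Let `A` be a conjugation on `V` and `N` a unit vector with
`AN = N`.  Let `T = {X | g(X,N) = 0}` and let `𝒬` be the maximal `𝔄`-invariant subspace of
`T`, i.e. the sum (supremum) of all real-linear subspaces `W ⊆ T` with `iW ⊆ W` and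
`AW ⊆ W`.  Then `𝒬 = 𝒞 = {X | ⟨X,N⟩ = 0}`, the maximal complex subspace of `T`. -/
theorem stmt_9 {V : Type*} [NormedAddCommGroup V] [InnerProductSpace ℂ V]
    [FiniteDimensional ℂ V]
    (g : V → V → ℝ) (hg : ∀ v w, g v w = (@inner ℂ V _ v w).re)
    (A : V →ₗ[ℝ] V)
    (hA₁ : ∀ v, A (Complex.I • v) = -(Complex.I • A v))
    (hA₂ : ∀ v, A (A v) = v)
    (hA₃ : ∀ v w, g (A v) (A w) = g v w)
    (N : V) (hN : ‖N‖ = 1) (hAN : A N = N)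
    (T : Set V) (hT : T = {X | g X N = 0})
    (Q : Submodule ℝ V)
    (hQ : Q = sSup {W : Submodule ℝ V | (W : Set V) ⊆ T ∧
      (∀ v ∈ W, Complex.I • v ∈ W) ∧ (∀ v ∈ W, A v ∈ W)}) :
    (Q : Set V) = {X | (@inner ℂ V _ X N) = 0} := by
  obtain rfl : g = fun v w => re ⟪v, w⟫_ℂ := funext₂ hg
  rw [hQ, hT]
  refine (congrArg _ (stmt_9_general hA₁ hA₃ hAN).csSup_eq).trans ?_
  exact Set.ext fun _ => mem_orthogonal_singleton_iff_inner_left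
end

section
/- (Lemma 4.1(ii).) Let A be a conjugation on V, let t ∈ (0, π/4], and let X₀, Y₀ ∈ V(A) be orthonormal (with respect to g). Set N = cos(t)·X₀ + sin(t)·iY₀ (a unit vector), T = {X ∈ V : g(X,N) = 0}, and let 𝒬 denote the maximal 𝔄-invariant subspace of T, i.e. the sum of all real-linear subspaces W ⊆ T with iW ⊆ W and AW ⊆ W. Then 𝒬 = {X ∈ V : ⟨X,N⟩ = 0 and ⟨X, iX₀ + Y₀⟩ = 0}; that is, 𝒬 = 𝒞 ⊖ ℂ(JX₀ + Y₀), the complex orthogonal complement of ℂ(iX₀+Y₀) inside the maximal complex subspace 𝒞 = {X : ⟨X,N⟩ = 0} of T. -/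
/-!
A subspace invariant under `i` lies in the real hyperplane `T = {X | g(X, N) = 0}` only if it is
complex orthogonal to `N`; if it is also invariant under `A`, applying this to `AX` makes it
orthogonal to `AN`. Conversely the complex orthogonal complement of `{N, AN}` is invariant under
`i` and `A`, so it is `𝒬`. For `N = aX₀ + b iY₀` with `a`, `b` real, the relation
`(a + b) AN = (a - b) N - 2ab i (iX₀ + Y₀)` shows that, for vectors orthogonal to `N`, orthogonality
to `AN` and to `iX₀ + Y₀` are the same as soon as `a`, `b` and `a + b` are nonzero.
-/

section AntilinearIsometry

open Complex ComplexConjugate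

variable {V : Type*} [NormedAddCommGroup V] [InnerProductSpace ℂ V]

/-- An antilinear isometry of a complex inner product space, encoded as a real-linear map that
anticommutes with `i` and preserves the real inner product. The conjugations are the antilinear
isometries that are involutions. -/
structure IsAntilinearIsometry (A : V →ₗ[ℝ] V) : Prop where
  map_I_smul (v : V) : A (I • v) = -(I • A v)
  re_inner_map_map (v w : V) : (inner ℂ (A v) (A w)).re = (inner ℂ v w).re

/-- The maximal subspace of `T` invariant under `i` and `A`, as the sum of all such subspaces; it is
then invariant under the whole circle of maps `λA`, `|λ| = 1`. For an arbitrary set `T` it need not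
be contained in `T`. -/
noncomputable def maximalInvariantSubspace (A : V →ₗ[ℝ] V) (T : Set V) : Submodule ℝ V :=
  sSup {W : Submodule ℝ V | (W : Set V) ⊆ T ∧ (∀ v ∈ W, I • v ∈ W) ∧ (∀ v ∈ W, A v ∈ W)}

theorem inner_I_smul_left (v w : V) : inner ℂ (I • v) w = -(I * inner ℂ v w) := by
  rw [inner_smul_left, conj_I, neg_mul]

theorem inner_eq_zero_iff_re_eq_zero {v w : V} :
    inner ℂ v w = 0 ↔ (inner ℂ v w).re = 0 ∧ (inner ℂ (I • v) w).re = 0 := by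
  rw [inner_I_smul_left, neg_re, I_mul_re, neg_neg, Complex.ext_iff, zero_re, zero_im]

namespace IsAntilinearIsometry

variable {A : V →ₗ[ℝ] V}

theorem inner_map_map (hA : IsAntilinearIsometry A) (v w : V) :
    inner ℂ (A v) (A w) = conj (inner ℂ v w) := by
  apply Complex.ext
  · rw [conj_re, hA.re_inner_map_map]
  · have h := hA.re_inner_map_map (I • v) w
    rw [hA.map_I_smul, inner_neg_left, inner_I_smul_left, inner_I_smul_left, neg_neg, neg_re,
      I_mul_re, I_mul_re, neg_neg] at h
    rw [conj_im, ← h, neg_neg]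

theorem inner_map_eq_zero_iff (hA : IsAntilinearIsometry A) {v w : V} :
    inner ℂ (A v) (A w) = 0 ↔ inner ℂ v w = 0 := by
  rw [hA.inner_map_map, map_eq_zero]

theorem inner_map_left_eq_zero_iff (hA : IsAntilinearIsometry A) {v w : V} (hw : A (A w) = w) :
    inner ℂ (A v) w = 0 ↔ inner ℂ v (A w) = 0 := by
  rw [← hA.inner_map_eq_zero_iff (w := A w), hw]

theorem mem_maximalInvariantSubspace_iff (hA : IsAntilinearIsometry A) {N : V}
    (hN : A (A N) = N) {X : V} :
    X ∈ maximalInvariantSubspace A {X | (inner ℂ X N).re = 0} ↔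
      inner ℂ X N = 0 ∧ inner ℂ X (A N) = 0 := by
  let S : Submodule ℝ V := ((ℂ ∙ N)ᗮ ⊓ (ℂ ∙ A N)ᗮ).restrictScalars ℝ
  have mem_S {Z : V} : Z ∈ S ↔ inner ℂ Z N = 0 ∧ inner ℂ Z (A N) = 0 := by
    simp only [S, Submodule.restrictScalars_mem, Submodule.mem_inf,
      Submodule.mem_orthogonal_singleton_iff_inner_left]
  suffices maximalInvariantSubspace A {X | (inner ℂ X N).re = 0} = S by rw [this, mem_S]
  apply le_antisymm
  · refine sSup_le fun W ⟨hWT, hWI, hWA⟩ => ?_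
    have inner_N_eq_zero (Z : V) (hZ : Z ∈ W) : inner ℂ Z N = 0 :=
      inner_eq_zero_iff_re_eq_zero.2 ⟨hWT hZ, hWT (hWI Z hZ)⟩
    exact fun Z hZ => mem_S.2 ⟨inner_N_eq_zero Z hZ,
      (hA.inner_map_left_eq_zero_iff hN).1 (inner_N_eq_zero (A Z) (hWA Z hZ))⟩
  · refine le_sSup ⟨fun Z hZ => ?_, fun Z hZ => ?_, fun Z hZ => ?_⟩
    · exact (inner_eq_zero_iff_re_eq_zero.1 (mem_S.1 hZ).1).1
    · exact ((ℂ ∙ N)ᗮ ⊓ (ℂ ∙ A N)ᗮ).smul_mem I hZ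
    · obtain ⟨hZN, hZAN⟩ := mem_S.1 hZ
      exact mem_S.2 ⟨(hA.inner_map_left_eq_zero_iff hN).2 hZAN, hA.inner_map_eq_zero_iff.2 hZN⟩

theorem map_smul_add_smul_I_smul (hA : IsAntilinearIsometry A) {x y : V} (hx : A x = x)
    (hy : A y = y) (a b : ℝ) : A (a • x + b • (I • y)) = a • x - b • (I • y) := by
  rw [map_add, map_smul, map_smul, hA.map_I_smul, hx, hy, smul_neg, sub_eq_add_neg]

end IsAntilinearIsometry

theorem inner_smul_sub_smul_I_smul_eq_zero_iff {a b : ℝ} (hab : a * b ≠ 0) (hadd : a + b ≠ 0)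
    {x y v : V} (hv : inner ℂ v (a • x + b • (I • y)) = 0) :
    inner ℂ v (a • x - b • (I • y)) = 0 ↔ inner ℂ v (I • x + y) = 0 := by
  have relation : ((a + b : ℝ) : ℂ) • (a • x - b • (I • y)) =
      ((a - b : ℝ) : ℂ) • (a • x + b • (I • y)) - (2 * (a * b : ℝ) * I) • (I • x + y) := by
    simp only [← Complex.coe_smul]
    match_scalars
    · linear_combination (2 * a * b : ℂ) * I_mul_I
    · ring
  have inner_relation := congrArg (inner ℂ v) relation
  rw [inner_sub_right v, inner_smul_right, inner_smul_right, inner_smul_right, hv, mul_zero,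
    zero_sub] at inner_relation
  have hab' : 2 * ((a * b : ℝ) : ℂ) * I ≠ 0 :=
    mul_ne_zero (mul_ne_zero two_ne_zero (ofReal_ne_zero.2 hab)) I_ne_zero
  rw [← mul_eq_zero_iff_left (ofReal_ne_zero.2 hadd), inner_relation, neg_eq_zero,
    mul_eq_zero_iff_left hab']

theorem stmt_10_general {A : V →ₗ[ℝ] V} (hA : IsAntilinearIsometry A) {X₀ Y₀ : V}
    (hX₀ : A X₀ = X₀) (hY₀ : A Y₀ = Y₀) {a b : ℝ} (hab : a * b ≠ 0) (hadd : a + b ≠ 0) :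
    (maximalInvariantSubspace A {X | (inner ℂ X (a • X₀ + b • (I • Y₀))).re = 0} : Set V) =
      {X | inner ℂ X (a • X₀ + b • (I • Y₀)) = 0 ∧ inner ℂ X (I • X₀ + Y₀) = 0} := by
  have map_N : A (a • X₀ + b • (I • Y₀)) = a • X₀ - b • (I • Y₀) :=
    hA.map_smul_add_smul_I_smul hX₀ hY₀ a b
  have map_map_N : A (A (a • X₀ + b • (I • Y₀))) = a • X₀ + b • (I • Y₀) := by
    rw [map_N, sub_eq_add_neg, ← neg_smul, hA.map_smul_add_smul_I_smul hX₀ hY₀, neg_smul,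
      sub_neg_eq_add]
  ext X
  rw [SetLike.mem_coe, hA.mem_maximalInvariantSubspace_iff map_map_N, map_N, Set.mem_ofPred_eq]
  exact and_congr_right (inner_smul_sub_smul_I_smul_eq_zero_iff hab hadd)

end AntilinearIsometry

/-- Lemma 4.1(ii): Let `A` be a conjugation on `V`, `t ∈ (0, π/4]`, and
`X₀, Y₀ ∈ V(A)` orthonormal.  Set `N = cos(t)X₀ + sin(t)iY₀`, `T = {X | g(X,N) = 0}`, and
let `𝒬` be the maximal `𝔄`-invariant subspace of `T` (the sum of all real subspaces
`W ⊆ T` with `iW ⊆ W` and `AW ⊆ W`).  Then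
`𝒬 = {X | ⟨X,N⟩ = 0 ∧ ⟨X, iX₀ + Y₀⟩ = 0} = 𝒞 ⊖ ℂ(iX₀ + Y₀)`. -/
theorem stmt_10 {V : Type*} [NormedAddCommGroup V] [InnerProductSpace ℂ V]
    [FiniteDimensional ℂ V]
    (g : V → V → ℝ) (hg : ∀ v w, g v w = (@inner ℂ V _ v w).re)
    (A : V →ₗ[ℝ] V)
    (hA₁ : ∀ v, A (Complex.I • v) = -(Complex.I • A v))
    (hA₂ : ∀ v, A (A v) = v)
    (hA₃ : ∀ v w, g (A v) (A w) = g v w)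
    (t : ℝ) (ht : t ∈ Set.Ioc 0 (Real.pi / 4))
    (X₀ Y₀ : V) (hX₀ : A X₀ = X₀) (hY₀ : A Y₀ = Y₀)
    (hX₀n : g X₀ X₀ = 1) (hY₀n : g Y₀ Y₀ = 1) (hXY : g X₀ Y₀ = 0)
    (N : V) (hN : N = Real.cos t • X₀ + Real.sin t • (Complex.I • Y₀))
    (T : Set V) (hT : T = {X | g X N = 0})
    (Q : Submodule ℝ V)
    (hQ : Q = sSup {W : Submodule ℝ V | (W : Set V) ⊆ T ∧
      (∀ v ∈ W, Complex.I • v ∈ W) ∧ (∀ v ∈ W, A v ∈ W)}) :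
    (Q : Set V) = {X | (@inner ℂ V _ X N) = 0 ∧
      (@inner ℂ V _ X (Complex.I • X₀ + Y₀)) = 0} := by
  have cos_pos : 0 < Real.cos t := Real.cos_pos_of_mem_Ioo
    ⟨by linarith [ht.1, Real.pi_pos], by linarith [ht.2, Real.pi_pos]⟩
  have sin_pos : 0 < Real.sin t :=
    Real.sin_pos_of_pos_of_lt_pi ht.1 (by linarith [ht.2, Real.pi_pos])
  obtain rfl : g = fun v w => (inner ℂ v w).re := funext₂ hg
  subst hN hT hQ
  exact stmt_10_general ⟨hA₁, hA₃⟩ hX₀ hY₀ (mul_pos cos_pos sin_pos).ne'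
    (add_pos cos_pos sin_pos).ne'
end

section
/- (Lemma 5.2, pointwise form.) Let A be a conjugation on V and suppose the unit vector N has the adapted form N = cos(t)·Z₁ + sin(t)·iZ₂ for some t ∈ ℝ and orthonormal Z₁, Z₂ ∈ V(A). Let α, k ∈ ℝ and let S : T → T be a g-self-adjoint linear map with Sξ = αξ, with φ(SX) + S(φX) = k·φX for all X ∈ T, and satisfying, for all X, Y ∈ T: 0 = 2g(SφSX, Y) − α·g((φS + Sφ)X, Y) + 2g(φX, Y) − 2g(X,AN)g(Y,Aξ) + 2g(Y,AN)g(X,Aξ) − 2g(ξ,Aξ)[g(Y,AN)η(X) − g(X,AN)η(Y)]. Then for all X ∈ T: 2S²X = [η(X)(2α² − αk − 2) − 2(g(φX,AN)η(Aξ) − η(AN)g(φX,Aξ))]·ξ + 2k·SX − (αk − 2)·X + g(φX,AN)·(Aξ)^T − g(φX,Aξ)·(AN)^T + g(φX,Aξ)·(iAξ)^T − (g(X,Aξ) − η(X)η(Aξ))·(Aξ)^T. -/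
/-!
The tangent hyperplane `T = Nᗮ` carries the almost contact structure `(φ, ξ, η)`, for which
`φ² = -1 + η ⊗ ξ`. The contact condition `φS + Sφ = kφ` gives
`SφSφ = (kS - S²)φ² = S² - kS + (αk - α²) η ⊗ ξ`. Hence an equation for `SφS`, such as the
identity of Lemma 4.2, becomes an equation for `S²X` when it is evaluated at `φX`.

Since `A` is antilinear, `Aξ = J(AN)`, so only the vector `a = AN` matters, and
`g(φX, a) = η(X)η(Ja) - g(X, Ja)` holds for every `a`. The adapted form of `N` makes its real and
imaginary parts with respect to `A` orthogonal, which means `η(AN) = 0`.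
-/

open scoped InnerProductSpace

section AlmostContact

variable {R M : Type*} [CommRing R] [AddCommGroup M] [Module R M]

theorem mul_mul_mul_eq_of_contact {B : Type*} [Ring B] [Algebra R B] {f s : B} {k : R}
    (h : f * s + s * f = k • f) : s * f * s * f = (k • s - s ^ 2) * f ^ 2 := by
  calc s * f * s * f = s * (f * s) * f := by simp only [mul_assoc]
    _ = s * (k • f - s * f) * f := by rw [eq_sub_of_add_eq h]
    _ = (k • s - s ^ 2) * f ^ 2 := by
      simp only [mul_sub, sub_mul, mul_smul_comm, smul_mul_assoc, sq, mul_assoc]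

/-- A linear almost contact structure `(φ, ξ, η)`: an endomorphism `φ`, a Reeb vector `ξ` and a
form `η` with `φ² = -1 + η ⊗ ξ` and `η ξ = 1`. -/
structure IsAlmostContact (φ : Module.End R M) (ξ : M) (η : Module.Dual R M) : Prop where
  apply_apply : ∀ X, φ (φ X) = -X + η X • ξ
  eta_reeb : η ξ = 1

namespace IsAlmostContact

variable {φ S : Module.End R M} {ξ : M} {η : Module.Dual R M} {α k : R}

theorem apply_reeb [IsReduced R] (h : IsAlmostContact φ ξ η) : φ ξ = 0 := by
  have hφφξ : φ (φ ξ) = 0 := by simp [h.apply_apply, h.eta_reeb]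
  have hφξ : φ ξ = η (φ ξ) • ξ := by
    have := h.apply_apply (φ ξ)
    rwa [hφφξ, map_zero, eq_comm, neg_add_eq_zero] at this
  have hη : η (φ ξ) = 0 := by
    rw [← pow_eq_zero_iff two_ne_zero]
    calc η (φ ξ) ^ 2 = η (φ (η (φ ξ) • ξ)) := by rw [map_smul, map_smul, smul_eq_mul, sq]
      _ = 0 := by rw [← hφξ, hφφξ, map_zero]
  rw [hφξ, hη, zero_smul]

theorem eta_apply [IsReduced R] (h : IsAlmostContact φ ξ η) (X : M) : η (φ X) = 0 := by
  have hφ : η (φ X) • ξ = 0 := by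
    have := h.apply_apply (φ X)
    rwa [h.apply_apply X, map_add, map_neg, map_smul, h.apply_reeb, smul_zero, add_zero,
      left_eq_add] at this
  simpa [h.eta_reeb] using congrArg η hφ

theorem apply_apply_apply_apply_of_contact (h : IsAlmostContact φ ξ η) (hξ : S ξ = α • ξ)
    (hc : φ * S + S * φ = k • φ) (X : M) :
    S (φ (S (φ X))) = S (S X) - k • S X + (η X * (α * k - α ^ 2)) • ξ := by
  calc S (φ (S (φ X))) = k • S (φ (φ X)) - S (S (φ (φ X))) := by
        simpa [sq] using LinearMap.congr_fun (mul_mul_mul_eq_of_contact hc) X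
    _ = _ := by
      simp only [h.apply_apply, map_add, map_neg, map_smul, hξ]
      module

theorem two_smul_apply_apply_of_contact (h : IsAlmostContact φ ξ η) (hξ : S ξ = α • ξ)
    (hc : φ * S + S * φ = k • φ) {ω : M → M}
    (hω : ∀ X, (2 : R) • S (φ (S X)) = α • (φ (S X) + S (φ X)) - (2 : R) • φ X + ω X) (X : M) :
    (2 : R) • S (S X) = (η X * (2 * α ^ 2 - α * k - 2)) • ξ + (2 * k) • S X
      - (α * k - 2) • X + ω (φ X) := by
  have hSφSφ := hω (φ X)
  have hcφ : φ (S (φ X)) + S (φ (φ X)) = k • φ (φ X) := LinearMap.congr_fun hc (φ X)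
  rw [h.apply_apply_apply_apply_of_contact hξ hc, hcφ, h.apply_apply] at hSφSφ
  linear_combination (norm := module) hSφSφ

end IsAlmostContact

end AlmostContact

section Hypersurface

variable {V : Type*} [NormedAddCommGroup V] [InnerProductSpace ℝ V]

theorem IsAlmostContact.two_smul_apply_apply_of_forall_inner {φ S : Module.End ℝ V}
    {ξ a b : V} {α k c : ℝ} (h : IsAlmostContact φ ξ (innerₗ V ξ)) (hξ : S ξ = α • ξ)
    (hc : φ * S + S * φ = k • φ)
    (hS : ∀ X Y, 0 = 2 * ⟪S (φ (S X)), Y⟫_ℝ - α * ⟪φ (S X) + S (φ X), Y⟫_ℝ + 2 * ⟪φ X, Y⟫_ℝ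
      - 2 * ⟪X, a⟫_ℝ * ⟪Y, b⟫_ℝ + 2 * ⟪Y, a⟫_ℝ * ⟪X, b⟫_ℝ
      - 2 * c * (⟪Y, a⟫_ℝ * ⟪X, ξ⟫_ℝ - ⟪X, a⟫_ℝ * ⟪Y, ξ⟫_ℝ)) (X : V) :
    (2 : ℝ) • S (S X) =
      (⟪X, ξ⟫_ℝ * (2 * α ^ 2 - α * k - 2) - 2 * (⟪φ X, a⟫_ℝ * c)) • ξ + (2 * k) • S X
        - (α * k - 2) • X + (2 * ⟪φ X, a⟫_ℝ) • b - (2 * ⟪φ X, b⟫_ℝ) • a := by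
  let ω (X : V) : V := (2 * ⟪X, a⟫_ℝ) • b - (2 * ⟪X, b⟫_ℝ) • a
    + (2 * c) • (⟪X, ξ⟫_ℝ • a - ⟪X, a⟫_ℝ • ξ)
  have hω (X : V) :
      (2 : ℝ) • S (φ (S X)) = α • (φ (S X) + S (φ X)) - (2 : ℝ) • φ X + ω X := by
    refine ext_inner_right ℝ fun Y ↦ ?_
    have hXY := hS X Y
    simp only [ω, inner_add_left, inner_sub_left, real_inner_smul_left,
      real_inner_comm _ Y] at hXY ⊢
    linear_combination -hXY
  have hηφ : ⟪φ X, ξ⟫_ℝ = 0 := (real_inner_comm _ _).trans (h.eta_apply X)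
  rw [h.two_smul_apply_apply_of_contact hξ hc hω X, innerₗ_apply_apply, real_inner_comm X]
  simp only [ω, hηφ]
  module

/-- An orthogonal complex structure on a real inner product space: it makes the space Hermitian. -/
structure IsOrthogonalComplexStructure (J : Module.End ℝ V) : Prop where
  apply_apply : ∀ v, J (J v) = -v
  inner_map_map : ∀ v w, ⟪J v, J w⟫_ℝ = ⟪v, w⟫_ℝ

theorem coe_orthogonalProjectionOnto_orthogonal_unit_singleton {N : V} (hN : ‖N‖ = 1) (v : V) :
    ((ℝ ∙ N)ᗮ.orthogonalProjectionOnto v : V) = v - ⟪v, N⟫_ℝ • N := by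
  simp [Submodule.starProjection_unit_singleton ℝ hN, real_inner_comm]

/-- The endomorphism `φ` of the hyperplane orthogonal to `N` induced by `J`. -/
noncomputable def tangentialEnd (J : Module.End ℝ V) (N : V) : Module.End ℝ (ℝ ∙ N)ᗮ :=
  (ℝ ∙ N)ᗮ.orthogonalProjectionOnto.toLinearMap ∘ₗ J ∘ₗ (ℝ ∙ N)ᗮ.subtype

theorem coe_tangentialEnd {N : V} (hN : ‖N‖ = 1) (J : Module.End ℝ V) (X : (ℝ ∙ N)ᗮ) :
    (tangentialEnd J N X : V) = J X - ⟪J X, N⟫_ℝ • N :=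
  coe_orthogonalProjectionOnto_orthogonal_unit_singleton hN (J X)

namespace IsOrthogonalComplexStructure

variable {J : Module.End ℝ V} {N : V}

theorem inner_map_left (hJ : IsOrthogonalComplexStructure J) (v w : V) :
    ⟪J v, w⟫_ℝ = -⟪v, J w⟫_ℝ := by
  rw [← hJ.inner_map_map v (J w), hJ.apply_apply, inner_neg_right, neg_neg]

theorem inner_map_self (hJ : IsOrthogonalComplexStructure J) (v : V) : ⟪J v, v⟫_ℝ = 0 := by
  linarith [hJ.inner_map_left v v, real_inner_comm v (J v)]

/-- The Reeb vector `ξ = -JN`, as an element of the hyperplane orthogonal to `N`. -/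
def reeb (hJ : IsOrthogonalComplexStructure J) (N : V) : (ℝ ∙ N)ᗮ :=
  ⟨-J N, Submodule.mem_orthogonal_singleton_iff_inner_left.2 <| by
    rw [inner_neg_left, hJ.inner_map_self, neg_zero]⟩

theorem tangentialEnd_apply (hJ : IsOrthogonalComplexStructure J) (hN : ‖N‖ = 1)
    (X : (ℝ ∙ N)ᗮ) : (tangentialEnd J N X : V) = J X - ⟪(hJ.reeb N : V), X⟫_ℝ • N := by
  rw [coe_tangentialEnd hN, hJ.inner_map_left, ← inner_neg_right, real_inner_comm]
  rfl

theorem isAlmostContact (hJ : IsOrthogonalComplexStructure J) (hN : ‖N‖ = 1) :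
    IsAlmostContact (tangentialEnd J N) (hJ.reeb N) (innerₗ _ (hJ.reeb N)) where
  apply_apply X := by
    have hφX : ⟪J (tangentialEnd J N X), N⟫_ℝ = 0 := by
      have hX : ⟪(X : V), N⟫_ℝ = 0 := Submodule.mem_orthogonal_singleton_iff_inner_left.1 X.2
      rw [coe_tangentialEnd hN, map_sub, hJ.apply_apply, map_smul, inner_sub_left,
        inner_neg_left, hX, real_inner_smul_left, hJ.inner_map_self, neg_zero, mul_zero, sub_zero]
    ext
    rw [coe_tangentialEnd hN, hφX, zero_smul, sub_zero, hJ.tangentialEnd_apply hN, map_sub,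
      map_smul, hJ.apply_apply, sub_eq_add_neg, ← smul_neg]
    rfl
  eta_reeb := by
    rw [innerₗ_apply_apply, Submodule.coe_inner, reeb, inner_neg_neg, hJ.inner_map_map,
      real_inner_self_eq_norm_sq, hN, one_pow]

theorem inner_tangentialEnd (hJ : IsOrthogonalComplexStructure J) (hN : ‖N‖ = 1)
    (X : (ℝ ∙ N)ᗮ) (a : V) :
    ⟪(tangentialEnd J N X : V), a⟫_ℝ =
      ⟪(X : V), hJ.reeb N⟫_ℝ * ⟪J a, hJ.reeb N⟫_ℝ - ⟪(X : V), J a⟫_ℝ := by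
  have hJa : ⟪J a, hJ.reeb N⟫_ℝ = -⟪N, a⟫_ℝ := by
    rw [reeb, inner_neg_right, hJ.inner_map_map, real_inner_comm]
  rw [hJ.tangentialEnd_apply hN, inner_sub_left, real_inner_smul_left, hJ.inner_map_left, hJa,
    real_inner_comm (X : V)]
  ring

theorem inner_map_add_map_of_antilinear (hJ : IsOrthogonalComplexStructure J)
    {A : Module.End ℝ V} (hA : ∀ v, A (J v) = -J (A v)) {x y : V} (hx : A x = x) (hy : A y = y) :
    ⟪A (x + J y), J (x + J y)⟫_ℝ = -2 * ⟪x, y⟫_ℝ := by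
  rw [map_add, hA, hx, hy, map_add, hJ.apply_apply, ← sub_eq_add_neg, ← sub_eq_add_neg,
    inner_sub_right, inner_sub_left, inner_sub_left, hJ.inner_map_map, hJ.inner_map_self,
    real_inner_comm _ x, hJ.inner_map_self, real_inner_comm x y]
  ring

end IsOrthogonalComplexStructure

theorem stmt_18_general {J : Module.End ℝ V} (hJ : IsOrthogonalComplexStructure J) {N ξ a : V}
    (hN : ‖N‖ = 1) (hξ : ξ = -J N) {φ tang : V → V} (hφ : ∀ X, φ X = J X - ⟪J X, N⟫_ℝ • N)
    (htang : ∀ v, tang v = v - ⟪v, N⟫_ℝ • N) {α k : ℝ} {S : Module.End ℝ V}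
    (hST : ∀ X, ⟪X, N⟫_ℝ = 0 → ⟪S X, N⟫_ℝ = 0) (hSξ : S ξ = α • ξ)
    (hcontact : ∀ X, ⟪X, N⟫_ℝ = 0 → φ (S X) + S (φ X) = k • φ X)
    (hCodazzi : ∀ X Y, ⟪X, N⟫_ℝ = 0 → ⟪Y, N⟫_ℝ = 0 →
      0 = 2 * ⟪S (φ (S X)), Y⟫_ℝ - α * ⟪φ (S X) + S (φ X), Y⟫_ℝ + 2 * ⟪φ X, Y⟫_ℝ
        - 2 * ⟪X, a⟫_ℝ * ⟪Y, J a⟫_ℝ + 2 * ⟪Y, a⟫_ℝ * ⟪X, J a⟫_ℝ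
        - 2 * ⟪ξ, J a⟫_ℝ * (⟪Y, a⟫_ℝ * ⟪X, ξ⟫_ℝ - ⟪X, a⟫_ℝ * ⟪Y, ξ⟫_ℝ)) :
    ∀ X, ⟪X, N⟫_ℝ = 0 →
      (2 : ℝ) • S (S X) =
        (⟪X, ξ⟫_ℝ * (2 * α ^ 2 - α * k - 2) - 2 * (⟪φ X, a⟫_ℝ * ⟪J a, ξ⟫_ℝ)) • ξ
        + (2 * k) • S X - (α * k - 2) • X
        + ⟪φ X, a⟫_ℝ • tang (J a) - ⟪φ X, J a⟫_ℝ • tang a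
        + ⟪φ X, J a⟫_ℝ • tang (J (J a))
        - (⟪X, J a⟫_ℝ - ⟪X, ξ⟫_ℝ * ⟪J a, ξ⟫_ℝ) • tang (J a) := by
  have hT (X : (ℝ ∙ N)ᗮ) : ⟪(X : V), N⟫_ℝ = 0 :=
    Submodule.mem_orthogonal_singleton_iff_inner_left.1 X.2
  let P := (ℝ ∙ N)ᗮ.orthogonalProjectionOnto
  have hP (v : V) : (P v : V) = tang v := by
    rw [htang, coe_orthogonalProjectionOnto_orthogonal_unit_singleton hN]
  have hPinner (X : (ℝ ∙ N)ᗮ) (v : V) : ⟪X, P v⟫_ℝ = ⟪(X : V), v⟫_ℝ :=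
    Submodule.inner_orthogonalProjectionOnto_eq_of_mem_left X v
  have hφT (X : (ℝ ∙ N)ᗮ) : φ X = tangentialEnd J N X := by rw [hφ, coe_tangentialEnd hN]
  let S' : Module.End ℝ (ℝ ∙ N)ᗮ := S.restrict fun X hX ↦
    Submodule.mem_orthogonal_singleton_iff_inner_left.2 <|
      hST X (Submodule.mem_orthogonal_singleton_iff_inner_left.1 hX)
  have hS' (X : (ℝ ∙ N)ᗮ) : S X = S' X := rfl
  obtain rfl : ξ = hJ.reeb N := hξ
  have hSξ' : S' (hJ.reeb N) = α • hJ.reeb N := Subtype.ext hSξ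
  have hcontact' : tangentialEnd J N * S' + S' * tangentialEnd J N = k • tangentialEnd J N := by
    ext X
    simpa [hφT, hS'] using hcontact X (hT X)
  intro X hX
  lift X to (ℝ ∙ N)ᗮ using Submodule.mem_orthogonal_singleton_iff_inner_left.2 hX
  have hJJa : tang (J (J a)) = -tang a := by rw [← hP, ← hP, hJ.apply_apply, map_neg]; rfl
  have hφX : ⟪(X : V), J a⟫_ℝ - ⟪(X : V), hJ.reeb N⟫_ℝ * ⟪J a, hJ.reeb N⟫_ℝ
      = -⟪(tangentialEnd J N X : V), a⟫_ℝ := by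
    rw [hJ.inner_tangentialEnd hN, neg_sub]
  have hSSX := congrArg (ℝ ∙ N)ᗮ.subtype <|
    (hJ.isAlmostContact hN).two_smul_apply_apply_of_forall_inner (a := P a) (b := P (J a))
      (c := ⟪(hJ.reeb N : V), J a⟫_ℝ) hSξ' hcontact'
      (fun X Y ↦ by simpa [hφT, hS', P] using hCodazzi X Y (hT X) (hT Y)) X
  simp only [map_add, map_sub, map_smul, Submodule.subtype_apply, ← hS', hP, hPinner] at hSSX
  rw [hφX, hJJa, hφT, hSSX, real_inner_comm (J a), Submodule.coe_inner]
  module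

end Hypersurface

section Complex

variable {V : Type*} [NormedAddCommGroup V] [InnerProductSpace ℂ V]

attribute [local instance] InnerProductSpace.complexToReal

theorem isOrthogonalComplexStructure_I_smul :
    IsOrthogonalComplexStructure (DistribSMul.toLinearMap ℝ V Complex.I) where
  apply_apply v := by simp [smul_smul]
  inner_map_map v w := by
    simp [real_inner_eq_re_inner ℂ, inner_smul_left, inner_smul_right]

end Complex

/-- Lemma 5.2, pointwise form: Let `A` be a conjugation on `V` and let the
unit vector `N` have the adapted form `N = cos(t)Z₁ + sin(t)iZ₂` with `Z₁, Z₂ ∈ V(A)`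
orthonormal.  Let `S : T → T` be `g`-self-adjoint with `Sξ = αξ`, `φS + Sφ = kφ` on `T`,
and satisfying the identity of Lemma 4.2.  Then for all `X ∈ T`:
`2S²X = [η(X)(2α² − αk − 2) − 2(g(φX,AN)η(Aξ) − η(AN)g(φX,Aξ))]ξ + 2kSX − (αk−2)X
+ g(φX,AN)(Aξ)^T − g(φX,Aξ)(AN)^T + g(φX,Aξ)(iAξ)^T − (g(X,Aξ) − η(X)η(Aξ))(Aξ)^T`. -/
theorem stmt_18 {V : Type*} [NormedAddCommGroup V] [InnerProductSpace ℂ V]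
    [FiniteDimensional ℂ V]
    (g : V → V → ℝ) (hg : ∀ v w, g v w = (@inner ℂ V _ v w).re)
    (A : V →ₗ[ℝ] V)
    (hA₁ : ∀ v, A (Complex.I • v) = -(Complex.I • A v))
    (hA₂ : ∀ v, A (A v) = v)
    (hA₃ : ∀ v w, g (A v) (A w) = g v w)
    (t : ℝ) (Z₁ Z₂ : V) (hZ₁ : A Z₁ = Z₁) (hZ₂ : A Z₂ = Z₂)
    (hZ₁n : g Z₁ Z₁ = 1) (hZ₂n : g Z₂ Z₂ = 1) (hZ₁₂ : g Z₁ Z₂ = 0)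
    (N : V) (hNform : N = Real.cos t • Z₁ + Real.sin t • (Complex.I • Z₂))
    (hN : ‖N‖ = 1)
    (ξ : V) (hξ : ξ = -(Complex.I • N))
    (η : V → ℝ) (hη : ∀ X, η X = g X ξ)
    (φ : V → V) (hφ : ∀ X, φ X = Complex.I • X - g (Complex.I • X) N • N)
    (tang : V → V) (htang : ∀ v, tang v = v - g v N • N)
    (α k : ℝ)
    (S : V →ₗ[ℝ] V)
    -- S maps T = {X | g(X,N) = 0} into itself
    (hST : ∀ X, g X N = 0 → g (S X) N = 0)
    -- S is g-self-adjoint on T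
    (hSsym : ∀ X Y, g X N = 0 → g Y N = 0 → g (S X) Y = g X (S Y))
    (hSξ : S ξ = α • ξ)
    -- the contact condition φS + Sφ = kφ on T
    (hcontact : ∀ X, g X N = 0 → φ (S X) + S (φ X) = k • φ X)
    -- the identity of Lemma 4.2
    (hlem42 : ∀ X Y, g X N = 0 → g Y N = 0 →
      0 = 2 * g (S (φ (S X))) Y - α * g (φ (S X) + S (φ X)) Y + 2 * g (φ X) Y
        - 2 * g X (A N) * g Y (A ξ) + 2 * g Y (A N) * g X (A ξ)
        - 2 * g ξ (A ξ) * (g Y (A N) * η X - g X (A N) * η Y)) :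
    ∀ X, g X N = 0 →
      (2 : ℝ) • S (S X) =
        (η X * (2 * α ^ 2 - α * k - 2)
          - 2 * (g (φ X) (A N) * η (A ξ) - η (A N) * g (φ X) (A ξ))) • ξ
        + (2 * k) • S X - (α * k - 2) • X
        + g (φ X) (A N) • tang (A ξ) - g (φ X) (A ξ) • tang (A N)
        + g (φ X) (A ξ) • tang (Complex.I • A ξ)
        - (g X (A ξ) - η X * η (A ξ)) • tang (A ξ) := by
  let _ := InnerProductSpace.complexToReal (G := V)
  have hJ := isOrthogonalComplexStructure_I_smul (V := V)
  have hgr : ∀ v w, g v w = ⟪v, w⟫_ℝ := hg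
  have hAξ : A ξ = Complex.I • A N := by rw [hξ, map_neg, hA₁, neg_neg]
  have hηAN : η (A N) = 0 := by
    have h := hJ.inner_map_add_map_of_antilinear hA₁ (x := Real.cos t • Z₁)
      (y := Real.sin t • Z₂) (by rw [map_smul, hZ₁]) (by rw [map_smul, hZ₂])
    rw [DistribSMul.toLinearMap_apply, ← smul_comm (Real.sin t), ← hNform,
      real_inner_smul_left, real_inner_smul_right, ← hgr Z₁, hZ₁₂] at h
    rw [hη, hgr, hξ, inner_neg_right]
    simpa using h
  simp only [hηAN, zero_mul, sub_zero]
  simp only [hgr, hη, hAξ] at hφ htang hST hcontact hlem42 ⊢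
  exact stmt_18_general hJ hN hξ hφ htang hST hSξ hcontact hlem42
end

section
/- (Lemma 5.4, pointwise form.) Let dim_ℂ V = m ≥ 2, let A be a conjugation on V, let N ∈ V be a unit vector, and let (E₁, …, E_{2m−1}) be an orthonormal basis of T with respect to g. Let C : T × T × T → ℝ be trilinear, symmetric in its last two arguments (C(U,Y,Z) = C(U,Z,Y)), and satisfy the Codazzi identity: for all X, Y, Z ∈ T, C(X,Y,Z) − C(Y,X,Z) = −η(X)g(φY,Z) + η(Y)g(φX,Z) + 2η(Z)g(φX,Y) − g(X,AN)g(AY,Z) + g(Y,AN)g(AX,Z) − g(X,Aξ)g(iAY,Z) + g(Y,Aξ)g(iAX,Z). Then for every X ∈ T: Σ_{i=1}^{2m−1} C(E_i, φE_i, X) = Σ_{i=1}^{2m−1} C(X, E_i, φE_i) + 2(m−1)η(X) − g(AX,Aξ) − g(AX,ξ)g(AN,N) + g(ξ,AN)g(AX,N) − g(AX,Aξ) + g(AX,N)g(N,Aξ) + η(Aξ)g(AX,ξ) + g(X,Aξ)·(Tr_ℝ(A) − g(AN,N) − η(Aξ)), where Tr_ℝ(A) = Σ_{i=1}^{2m−1}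 g(AE_i,E_i) + g(AN,N) is the trace of A as a real-linear endomorphism of V. -/
/-! Put `Z = φEᵢ` and `Y = X` in the Codazzi identity and sum over `i`: each term becomes a trace
over `T = N^⊥`. As `φ` is skew on `T`, Parseval evaluates the terms with a free factor `⟪·, Eᵢ⟫`,
and the trace of the symmetric `A` against the skew `φ` vanishes. Since `φ` is an isometry off the
line `ℝξ`, the two remaining traces are those of the identity and of `A`, corrected by their
`ξ`-components. -/

namespace RealHypersurface

open scoped InnerProductSpace
open Complex Submodule

section OrthonormalFamily

variable {𝕜 F ι : Type*} [RCLike 𝕜] [NormedAddCommGroup F] [Fintype ι]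

theorem sum_inner_mul_inner_of_mem_span [InnerProductSpace 𝕜 F] {E : ι → F}
    (hE : Orthonormal 𝕜 E) {v : F} (hv : v ∈ span 𝕜 (Set.range E)) (w : F) :
    ∑ i, ⟪v, E i⟫_𝕜 * ⟪E i, w⟫_𝕜 = ⟪v, w⟫_𝕜 := by
  obtain ⟨c, rfl⟩ := (mem_span_range_iff_exists_fun 𝕜).1 hv
  simp only [hE.inner_left_fintype, sum_inner, inner_smul_left]

theorem sum_inner_eq_zero_of_symmetric_of_skew [InnerProductSpace ℝ F] {E s t : ι → F}
    (hE : Orthonormal ℝ E) (ht : ∀ i, t i ∈ span ℝ (Set.range E))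
    (s_symm : ∀ i j, ⟪s i, E j⟫_ℝ = ⟪s j, E i⟫_ℝ)
    (t_skew : ∀ i j, ⟪t i, E j⟫_ℝ = -⟪t j, E i⟫_ℝ) :
    ∑ i, ⟪t i, s i⟫_ℝ = 0 := by
  have expand : ∑ i, ⟪t i, s i⟫_ℝ = ∑ i, ∑ j, ⟪t i, E j⟫_ℝ * ⟪E j, s i⟫_ℝ :=
    Finset.sum_congr rfl fun i _ ↦ (sum_inner_mul_inner_of_mem_span hE (ht i) (s i)).symm
  have antisymm : ∑ i, ∑ j, ⟪t i, E j⟫_ℝ * ⟪E j, s i⟫_ℝ =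
      -∑ i, ∑ j, ⟪t i, E j⟫_ℝ * ⟪E j, s i⟫_ℝ := by
    conv_lhs => rw [Finset.sum_comm]
    simp only [← Finset.sum_neg_distrib]
    refine Finset.sum_congr rfl fun i _ ↦ Finset.sum_congr rfl fun j _ ↦ ?_
    rw [t_skew j i, real_inner_comm (s j), s_symm j i, real_inner_comm (s i), neg_mul]
  linarith

end OrthonormalFamily

attribute [local instance] InnerProductSpace.complexToReal

variable {V : Type*} [NormedAddCommGroup V] [InnerProductSpace ℂ V]

theorem real_inner_I_smul_left (v w : V) : ⟪I • v, w⟫_ℝ = -⟪v, I • w⟫_ℝ := by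
  simp [real_inner_eq_re_inner ℂ, inner_smul_left, inner_smul_right]

theorem real_inner_I_smul_I_smul (v w : V) : ⟪I • v, I • w⟫_ℝ = ⟪v, w⟫_ℝ := by
  simp [real_inner_eq_re_inner ℂ, inner_smul_left, inner_smul_right]

/-- The Reeb vector `ξ = -JN` of a real hypersurface with normal vector `N`. -/
def reebVector (N : V) : V := -(I • N)

/-- The structure tensor `φ` of a real hypersurface with unit normal `N`: `φX` is the tangential
part of `JX`. It is defined on all of `V`, where it is skew only after restriction to `N^⊥`. -/
noncomputable def structureTensor (N X : V) : V := I • X - ⟪I • X, N⟫_ℝ • N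

/-- The right-hand side of the Codazzi equation of `Q^{m∗}`, where `A` is the conjugation and `N`
the unit normal. -/
noncomputable def codazziForm (A : V → V) (N X Y Z : V) : ℝ :=
  -⟪X, reebVector N⟫_ℝ * ⟪structureTensor N Y, Z⟫_ℝ
    + ⟪Y, reebVector N⟫_ℝ * ⟪structureTensor N X, Z⟫_ℝ
    + 2 * ⟪Z, reebVector N⟫_ℝ * ⟪structureTensor N X, Y⟫_ℝ
    - ⟪X, A N⟫_ℝ * ⟪A Y, Z⟫_ℝ + ⟪Y, A N⟫_ℝ * ⟪A X, Z⟫_ℝ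
    - ⟪X, A (reebVector N)⟫_ℝ * ⟪I • A Y, Z⟫_ℝ + ⟪Y, A (reebVector N)⟫_ℝ * ⟪I • A X, Z⟫_ℝ

section Algebra

variable (N v w : V)

theorem I_smul_reebVector : I • reebVector N = N := by
  rw [reebVector, smul_neg, smul_smul, I_mul_I, neg_one_smul, neg_neg]

theorem inner_I_smul_normal : ⟪I • v, N⟫_ℝ = ⟪v, reebVector N⟫_ℝ := by
  rw [real_inner_I_smul_left, reebVector, inner_neg_right]

theorem inner_I_smul_reebVector : ⟪I • v, reebVector N⟫_ℝ = -⟪v, N⟫_ℝ := by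
  rw [real_inner_I_smul_left, I_smul_reebVector]

theorem inner_reebVector_normal : ⟪reebVector N, N⟫_ℝ = 0 := by
  have h := inner_I_smul_reebVector N (reebVector N)
  rw [I_smul_reebVector, real_inner_comm] at h
  linarith

theorem inner_reebVector_self : ⟪reebVector N, reebVector N⟫_ℝ = ⟪N, N⟫_ℝ := by
  rw [← inner_I_smul_normal, I_smul_reebVector]

theorem inner_structureTensor_left :
    ⟪structureTensor N v, w⟫_ℝ = ⟪I • v, w⟫_ℝ - ⟪v, reebVector N⟫_ℝ * ⟪w, N⟫_ℝ := by
  rw [structureTensor, inner_sub_left, real_inner_smul_left, inner_I_smul_normal N v,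
    real_inner_comm w N]

theorem inner_structureTensor_reebVector :
    ⟪structureTensor N v, reebVector N⟫_ℝ = -⟪v, N⟫_ℝ := by
  rw [inner_structureTensor_left, inner_I_smul_reebVector, inner_reebVector_normal, mul_zero,
    sub_zero]

variable {N}

theorem inner_structureTensor_normal (hN : ‖N‖ = 1) : ⟪structureTensor N v, N⟫_ℝ = 0 := by
  rw [inner_structureTensor_left, inner_I_smul_normal, inner_self_eq_one_of_norm_eq_one hN,
    mul_one, sub_self]

theorem inner_structureTensor_structureTensor (hN : ‖N‖ = 1) :
    ⟪structureTensor N v, structureTensor N w⟫_ℝ =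
      ⟪v, w⟫_ℝ - ⟪v, reebVector N⟫_ℝ * ⟪w, reebVector N⟫_ℝ := by
  rw [inner_structureTensor_left, inner_structureTensor_normal w hN, real_inner_comm,
    inner_structureTensor_left, real_inner_I_smul_I_smul, inner_I_smul_normal, real_inner_comm]
  ring

variable {v w}

-- `φv + ⟪v, N⟫ξ` is `φ` of the tangential part of `v`, since `φN = -ξ`.
theorem inner_structureTensor_of_inner_normal_eq_zero (hw : ⟪w, N⟫_ℝ = 0) :
    ⟪v, structureTensor N w⟫_ℝ = -⟪structureTensor N v + ⟪v, N⟫_ℝ • reebVector N, w⟫_ℝ := by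
  rw [real_inner_comm, inner_structureTensor_left, inner_add_left, real_inner_smul_left,
    inner_structureTensor_left, hw, real_inner_I_smul_left, real_inner_comm w (reebVector N),
    real_inner_comm w (I • v)]
  ring

theorem inner_structureTensor_skew (hv : ⟪v, N⟫_ℝ = 0) (hw : ⟪w, N⟫_ℝ = 0) :
    ⟪structureTensor N v, w⟫_ℝ = -⟪structureTensor N w, v⟫_ℝ := by
  rw [real_inner_comm, inner_structureTensor_of_inner_normal_eq_zero hv, hw, zero_smul, add_zero]

theorem map_reebVector {A : V →ₗ[ℝ] V} (hAI : ∀ v, A (I • v) = -(I • A v)) :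
    A (reebVector N) = I • A N := by
  rw [reebVector, map_neg, hAI, neg_neg]

end Algebra

section Traces

variable {ι : Type*} {N : V} {E : ι → V} {A : V →ₗ[ℝ] V}
  (hspan : span ℝ (Set.range E) = (ℝ ∙ N)ᗮ)

include hspan

theorem mem_span_range_iff_inner_normal_eq_zero {v : V} :
    v ∈ span ℝ (Set.range E) ↔ ⟪v, N⟫_ℝ = 0 := by
  rw [hspan, mem_orthogonal_singleton_iff_inner_left]

theorem inner_normal_eq_zero (i : ι) : ⟪E i, N⟫_ℝ = 0 :=
  (mem_span_range_iff_inner_normal_eq_zero hspan).1 (subset_span ⟨i, rfl⟩)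

variable [Fintype ι] (hE : Orthonormal ℝ E)

include hE

theorem sum_inner_mul_inner_reebVector (v : V) :
    ∑ i, ⟪E i, reebVector N⟫_ℝ * ⟪E i, v⟫_ℝ = ⟪reebVector N, v⟫_ℝ := by
  have hξ := (mem_span_range_iff_inner_normal_eq_zero hspan).2 (inner_reebVector_normal N)
  simp only [← sum_inner_mul_inner_of_mem_span hE hξ v, real_inner_comm (reebVector N)]

theorem sum_inner_mul_inner_structureTensor (hN : ‖N‖ = 1) (u v : V) :
    ∑ i, ⟪E i, u⟫_ℝ * ⟪v, structureTensor N (E i)⟫_ℝ =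
      ⟪I • u, v⟫_ℝ + ⟪v, reebVector N⟫_ℝ * ⟪u, N⟫_ℝ - ⟪v, N⟫_ℝ * ⟪u, reebVector N⟫_ℝ := by
  let z := structureTensor N v + ⟪v, N⟫_ℝ • reebVector N
  have hz : z ∈ span ℝ (Set.range E) := by
    rw [mem_span_range_iff_inner_normal_eq_zero hspan, inner_add_left, real_inner_smul_left,
      inner_structureTensor_normal v hN, inner_reebVector_normal, mul_zero, add_zero]
  calc ∑ i, ⟪E i, u⟫_ℝ * ⟪v, structureTensor N (E i)⟫_ℝ
      = ∑ i, -(⟪z, E i⟫_ℝ * ⟪E i, u⟫_ℝ) := Finset.sum_congr rfl fun i _ ↦ by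
        rw [inner_structureTensor_of_inner_normal_eq_zero (inner_normal_eq_zero hspan i),
          mul_neg, mul_comm]
    _ = -⟪z, u⟫_ℝ := by rw [Finset.sum_neg_distrib, sum_inner_mul_inner_of_mem_span hE hz]
    _ = ⟪I • u, v⟫_ℝ + ⟪v, reebVector N⟫_ℝ * ⟪u, N⟫_ℝ
          - ⟪v, N⟫_ℝ * ⟪u, reebVector N⟫_ℝ := by
        rw [inner_add_left, real_inner_smul_left, inner_structureTensor_left,
          real_inner_I_smul_left v, real_inner_comm (I • u), real_inner_comm u (reebVector N)]
        ring

theorem sum_inner_structureTensor_self (hN : ‖N‖ = 1) :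
    ∑ i, ⟪structureTensor N (E i), structureTensor N (E i)⟫_ℝ = Fintype.card ι - 1 := by
  simp only [inner_structureTensor_structureTensor _ _ hN, Finset.sum_sub_distrib,
    sum_inner_mul_inner_reebVector hspan hE, inner_reebVector_self,
    inner_self_eq_one_of_norm_eq_one hN, inner_self_eq_one_of_norm_eq_one (hE.1 _),
    Finset.sum_const, Finset.card_univ, nsmul_eq_mul, mul_one]

theorem sum_inner_map_structureTensor_eq_zero (hN : ‖N‖ = 1) (hA : A.IsSymmetric) :
    ∑ i, ⟪A (E i), structureTensor N (E i)⟫_ℝ = 0 := by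
  simp only [real_inner_comm (structureTensor N _)]
  exact sum_inner_eq_zero_of_symmetric_of_skew hE
    (fun i ↦ (mem_span_range_iff_inner_normal_eq_zero hspan).2 (inner_structureTensor_normal _ hN))
    (fun i j ↦ (hA _ _).trans (real_inner_comm _ _))
    fun i j ↦ inner_structureTensor_skew
      (inner_normal_eq_zero hspan i) (inner_normal_eq_zero hspan j)

theorem sum_inner_I_smul_map_structureTensor (hA : A.IsSymmetric) :
    ∑ i, ⟪I • A (E i), structureTensor N (E i)⟫_ℝ =
      ∑ i, ⟪A (E i), E i⟫_ℝ - ⟪A (reebVector N), reebVector N⟫_ℝ := by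
  have pointwise (i : ι) : ⟪I • A (E i), structureTensor N (E i)⟫_ℝ =
      ⟪A (E i), E i⟫_ℝ - ⟪E i, reebVector N⟫_ℝ * ⟪E i, A (reebVector N)⟫_ℝ := by
    rw [real_inner_comm, inner_structureTensor_left, real_inner_I_smul_I_smul, inner_I_smul_normal,
      hA, real_inner_comm]
  rw [Finset.sum_congr rfl fun i _ ↦ pointwise i, Finset.sum_sub_distrib,
    sum_inner_mul_inner_reebVector hspan hE, real_inner_comm]

theorem sum_codazziForm (hN : ‖N‖ = 1) (hA : A.IsSymmetric)
    (hAI : ∀ v, A (I • v) = -(I • A v)) (X : V) :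
    ∑ i, codazziForm A N (E i) X (structureTensor N (E i)) =
      (Fintype.card ι - 1) * ⟪X, reebVector N⟫_ℝ
        - 2 * ⟪A X, A (reebVector N)⟫_ℝ + 2 * ⟪A X, N⟫_ℝ * ⟪A N, reebVector N⟫_ℝ
        + ⟪A X, reebVector N⟫_ℝ * (⟪A (reebVector N), reebVector N⟫_ℝ - ⟪A N, N⟫_ℝ)
        + ⟪X, A (reebVector N)⟫_ℝ *
          (∑ i, ⟪A (E i), E i⟫_ℝ - ⟪A (reebVector N), reebVector N⟫_ℝ) := by
  have ξ_term :
      ∑ i, ⟪E i, reebVector N⟫_ℝ * ⟪structureTensor N X, structureTensor N (E i)⟫_ℝ = 0 := by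
    rw [sum_inner_mul_inner_structureTensor hspan hE hN, I_smul_reebVector, real_inner_comm,
      inner_structureTensor_normal X hN, inner_reebVector_normal]
    ring
  have AN_term : ∑ i, ⟪E i, A N⟫_ℝ * ⟪A X, structureTensor N (E i)⟫_ℝ =
      ⟪A X, A (reebVector N)⟫_ℝ + ⟪A X, reebVector N⟫_ℝ * ⟪A N, N⟫_ℝ
        - ⟪A X, N⟫_ℝ * ⟪A N, reebVector N⟫_ℝ := by
    rw [sum_inner_mul_inner_structureTensor hspan hE hN, ← map_reebVector hAI, real_inner_comm]
  have Aξ_term : ∑ i, ⟪E i, A (reebVector N)⟫_ℝ * ⟪I • A X, structureTensor N (E i)⟫_ℝ =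
      ⟪A X, A (reebVector N)⟫_ℝ - ⟪A X, N⟫_ℝ * ⟪A N, reebVector N⟫_ℝ
        - ⟪A X, reebVector N⟫_ℝ * ⟪A (reebVector N), reebVector N⟫_ℝ := by
    rw [sum_inner_mul_inner_structureTensor hspan hE hN, real_inner_I_smul_I_smul,
      inner_I_smul_reebVector, inner_I_smul_normal, hA (reebVector N) N, real_inner_comm (A X),
      real_inner_comm (A N)]
    ring
  have η_structureTensor (i : ι) : ⟪structureTensor N (E i), reebVector N⟫_ℝ = 0 := by
    rw [inner_structureTensor_reebVector, inner_normal_eq_zero hspan, neg_zero]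
  simp only [codazziForm, η_structureTensor, neg_mul, mul_zero, zero_mul, add_zero,
    Finset.sum_add_distrib, Finset.sum_sub_distrib, Finset.sum_neg_distrib, ← Finset.mul_sum,
    ξ_term, AN_term, Aξ_term, sum_inner_structureTensor_self hspan hE hN,
    sum_inner_map_structureTensor_eq_zero hspan hE hN hA,
    sum_inner_I_smul_map_structureTensor hspan hE hA]
  ring

end Traces

end RealHypersurface

open RealHypersurface in
theorem stmt_19_general {V ι : Type*} [NormedAddCommGroup V] [InnerProductSpace ℂ V]
    [Fintype ι] [DecidableEq ι]
    (g : V → V → ℝ) (hg : ∀ v w, g v w = (@inner ℂ V _ v w).re)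
    (A : V →ₗ[ℝ] V)
    (hAI : ∀ v, A (Complex.I • v) = -(Complex.I • A v))
    (hAsymm : ∀ v w, g (A v) w = g v (A w))
    (N : V) (hN : ‖N‖ = 1)
    (ξ : V) (hξ : ξ = -(Complex.I • N))
    (η : V → ℝ) (hη : ∀ X, η X = g X ξ)
    (φ : V → V) (hφ : ∀ X, φ X = Complex.I • X - g (Complex.I • X) N • N)
    (E : ι → V)
    (hET : ∀ i, g (E i) N = 0)
    (hEorth : ∀ i j, g (E i) (E j) = if i = j then 1 else 0)
    (hEspan : ∀ X, g X N = 0 → X ∈ Submodule.span ℝ (Set.range E))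
    (trA : ℝ) (htrA : trA = (∑ i, g (A (E i)) (E i)) + g (A N) N)
    (C : V → V → V → ℝ)
    (hCsym : ∀ U Y Z, g U N = 0 → g Y N = 0 → g Z N = 0 → C U Y Z = C U Z Y)
    (hCodazzi : ∀ X Y Z, g X N = 0 → g Y N = 0 → g Z N = 0 →
      C X Y Z - C Y X Z =
        -η X * g (φ Y) Z + η Y * g (φ X) Z + 2 * η Z * g (φ X) Y
        - g X (A N) * g (A Y) Z + g Y (A N) * g (A X) Z
        - g X (A ξ) * g (Complex.I • A Y) Z + g Y (A ξ) * g (Complex.I • A X) Z)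
    (X : V) (hX : g X N = 0) :
    (∑ i, C (E i) (φ (E i)) X) =
      (∑ i, C X (E i) (φ (E i))) + ((Fintype.card ι : ℝ) - 1) * η X
      - g (A X) (A ξ) - g (A X) ξ * g (A N) N + g ξ (A N) * g (A X) N
      - g (A X) (A ξ) + g (A X) N * g N (A ξ) + η (A ξ) * g (A X) ξ
      + g X (A ξ) * (trA - g (A N) N - η (A ξ)) := by
  let _ := InnerProductSpace.complexToReal (G := V)
  obtain rfl : g = fun v w ↦ inner ℝ v w := funext₂ hg
  obtain rfl : ξ = reebVector N := hξ
  obtain rfl : η = fun Y ↦ inner ℝ Y (reebVector N) := funext hη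
  obtain rfl : φ = structureTensor N := funext hφ
  beta_reduce at *
  have hspan : Submodule.span ℝ (Set.range E) = (Submodule.span ℝ {N})ᗮ := by
    refine le_antisymm (Submodule.span_le.2 ?_) fun Y hY ↦ hEspan Y ?_
    · rintro _ ⟨i, rfl⟩
      exact Submodule.mem_orthogonal_singleton_iff_inner_left.2 (hET i)
    · exact Submodule.mem_orthogonal_singleton_iff_inner_left.1 hY
  have pointwise (i : ι) : C (E i) (structureTensor N (E i)) X =
      C X (E i) (structureTensor N (E i)) + codazziForm A N (E i) X (structureTensor N (E i)) := by
    have hφE := inner_structureTensor_normal (E i) hN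
    rw [hCsym _ _ _ (hET i) hφE hX]
    exact sub_eq_iff_eq_add'.1 (hCodazzi _ _ _ (hET i) hX hφE)
  rw [Finset.sum_congr rfl fun i _ ↦ pointwise i, Finset.sum_add_distrib,
    sum_codazziForm hspan (orthonormal_iff_ite.2 hEorth) hN hAsymm hAI, htrA,
    ← hAsymm N, real_inner_comm (A N)]
  ring

/-- Lemma 5.4, pointwise form: Let `dim_ℂ V = m ≥ 2`, `A` a conjugation on
`V`, `N` a unit vector, `(E₁, …, E_{2m−1})` a `g`-orthonormal basis of
`T = {X | g(X,N) = 0}`, and `C : T×T×T → ℝ` trilinear, symmetric in its last two arguments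
and satisfying the Codazzi identity.  Then for every `X ∈ T`:
`Σᵢ C(Eᵢ, φEᵢ, X) = Σᵢ C(X, Eᵢ, φEᵢ) + 2(m−1)η(X) − g(AX,Aξ) − g(AX,ξ)g(AN,N)
+ g(ξ,AN)g(AX,N) − g(AX,Aξ) + g(AX,N)g(N,Aξ) + η(Aξ)g(AX,ξ)
+ g(X,Aξ)(Tr_ℝ(A) − g(AN,N) − η(Aξ))`,
where `Tr_ℝ(A) = Σᵢ g(AEᵢ,Eᵢ) + g(AN,N)`. -/
theorem stmt_19 {V : Type*} [NormedAddCommGroup V] [InnerProductSpace ℂ V]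
    [FiniteDimensional ℂ V]
    (m : ℕ) (hm : 2 ≤ m) (hdim : Module.finrank ℂ V = m)
    (g : V → V → ℝ) (hg : ∀ v w, g v w = (@inner ℂ V _ v w).re)
    (A : V →ₗ[ℝ] V)
    (hA₁ : ∀ v, A (Complex.I • v) = -(Complex.I • A v))
    (hA₂ : ∀ v, A (A v) = v)
    (hA₃ : ∀ v w, g (A v) (A w) = g v w)
    (N : V) (hN : ‖N‖ = 1)
    (ξ : V) (hξ : ξ = -(Complex.I • N))
    (η : V → ℝ) (hη : ∀ X, η X = g X ξ)
    (φ : V → V) (hφ : ∀ X, φ X = Complex.I • X - g (Complex.I • X) N • N)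
    (E : Fin (2 * m - 1) → V)
    (hET : ∀ i, g (E i) N = 0)
    (hEorth : ∀ i j, g (E i) (E j) = if i = j then 1 else 0)
    (hEspan : ∀ X, g X N = 0 → X ∈ Submodule.span ℝ (Set.range E))
    (trA : ℝ) (htrA : trA = (∑ i, g (A (E i)) (E i)) + g (A N) N)
    (C : V →ₗ[ℝ] V →ₗ[ℝ] V →ₗ[ℝ] ℝ)
    -- C is symmetric in its last two arguments (on T)
    (hCsym : ∀ U Y Z, g U N = 0 → g Y N = 0 → g Z N = 0 → C U Y Z = C U Z Y)
    -- the Codazzi identity (on T)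
    (hCodazzi : ∀ X Y Z, g X N = 0 → g Y N = 0 → g Z N = 0 →
      C X Y Z - C Y X Z =
        -η X * g (φ Y) Z + η Y * g (φ X) Z + 2 * η Z * g (φ X) Y
        - g X (A N) * g (A Y) Z + g Y (A N) * g (A X) Z
        - g X (A ξ) * g (Complex.I • A Y) Z + g Y (A ξ) * g (Complex.I • A X) Z) :
    ∀ X, g X N = 0 →
      (∑ i, C (E i) (φ (E i)) X) =
        (∑ i, C X (E i) (φ (E i))) + 2 * ((m : ℝ) - 1) * η X
        - g (A X) (A ξ) - g (A X) ξ * g (A N) N + g ξ (A N) * g (A X) N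
        - g (A X) (A ξ) + g (A X) N * g N (A ξ) + η (A ξ) * g (A X) ξ
        + g X (A ξ) * (trA - g (A N) N - η (A ξ)) := by
  have hcard : (Fintype.card (Fin (2 * m - 1)) : ℝ) - 1 = 2 * ((m : ℝ) - 1) := by
    rw [Fintype.card_fin, Nat.cast_sub (by lia)]; push_cast; ring
  rw [← hcard]
  exact stmt_19_general g hg A hA₁ (fun v w ↦ by rw [← hA₃ v, hA₂]) N hN ξ hξ η hη φ hφ E hET hEorth
    hEspan trA htrA (fun U Y Z ↦ C U Y Z) hCsym hCodazzi
end
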